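/- Let n ≥ 3 and let F be a regular Euclidean n-gon in ℝ² with vertices v_k = c + R·(cos(θ + 2πk/n), sin(θ + 2πk/n)) for k = 0,…,n−1, where c ∈ ℝ², R > 0 and θ ∈ ℝ. For any two points a, b on the boundary ∂F = ⋃_k [v_k, v_{k+1 mod n}], let ℓ(a,b) be the length of the shorter of the two boundary arcs of ∂F joining a and b. Then ℓ(a,b) ≤ (2 + π/2)·‖a − b‖. -/

import Mathlib

/-!
Points dividing the sides `[v j, v (j + 1)]` and `[v k, v (k + 1)]` in the ratios `a` and `b`, with
`j < k`, are at least as far apart as their projections onto the common direction of the parallel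
chords `v (k + 1) - v j` and `v k - v (j + 1)`. Both this projected distance and the length of the
boundary path between the points are affine functions of `b - a ∈ [-1, 1]`, so it is enough to
compare them for `b - a = ±1`. There the comparison is between the length of `m = k - j ± 1` sides
and the chord spanned by `m` sides, that is, `m sin (π / n) ≤ (2 + π / 2) sin (m π / n)`. By
concavity of the sine this holds for `m π / n ≤ 3 π / 4`. Of the two boundary paths, one satisfies
`k - j ≤ n / 2`, and then `m ≤ n / 2 + 1`, which for integers `m` and `n ≥ 3` gives `m ≤ 3 n / 4`.
-/

open Real

/-- The vertices of the regular `n`-gon with circumcenter `c`, circumradius `R` and phase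
`θ`, indexed by `ℤ` (so that `v (k + n) = v k`). -/
noncomputable def regularPolygonVertex (n : ℕ) (c : EuclideanSpace ℝ (Fin 2)) (R θ : ℝ)
    (k : ℤ) : EuclideanSpace ℝ (Fin 2) :=
  c + R • (WithLp.equiv 2 (Fin 2 → ℝ)).symm
    ![Real.cos (θ + 2 * π * k / n), Real.sin (θ + 2 * π * k / n)]

/-- The arc-length parametrization of the boundary of the regular `n`-gon: for
`u ∈ [k·L, (k+1)·L]` (where `L` is the side length), the point `γ u` travels along the
side from vertex `k` to vertex `k + 1` at unit speed. -/
noncomputable def regularPolygonBoundary (n : ℕ) (c : EuclideanSpace ℝ (Fin 2)) (R θ : ℝ)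
    (u : ℝ) : EuclideanSpace ℝ (Fin 2) :=
  let v := regularPolygonVertex n c R θ
  let L : ℝ := ‖v 1 - v 0‖
  v ⌊u / L⌋ + (u / L - (⌊u / L⌋ : ℝ)) • (v (⌊u / L⌋ + 1) - v ⌊u / L⌋)

theorem mul_sin_le_mul_sin {y z : ℝ} (hy : 0 ≤ y) (hyz : y ≤ z) (hz : z ≤ π) :
    y * sin z ≤ z * sin y := by
  rcases hy.eq_or_lt with rfl | hy
  · simp
  have hz₀ : 0 < z := hy.trans_le hyz
  have hconcave : (1 - y / z) * sin 0 + y / z * sin z ≤ sin ((1 - y / z) * 0 + y / z * z) :=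
    strictConcaveOn_sin_Icc.concaveOn.2 (Set.left_mem_Icc.2 pi_pos.le) ⟨hz₀.le, hz⟩
      (sub_nonneg.2 ((div_le_one hz₀).2 hyz)) (by positivity) (by ring)
  rw [sin_zero, mul_zero, zero_add, zero_add, div_mul_cancel₀ y hz₀.ne'] at hconcave
  calc y * sin z = z * (y / z * sin z) := by field_simp
    _ ≤ z * sin y := by gcongr

theorem le_two_add_pi_div_two_mul_sin {y : ℝ} (hy : 0 ≤ y) (hy' : y ≤ 3 * π / 4) :
    y ≤ (2 + π / 2) * sin y := by
  have hpi := pi_lt_d2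
  have hpi₀ := pi_pos
  have hsin : sin (3 * π / 4) = √2 / 2 := by
    rw [← sin_pi_div_four, ← sin_pi_sub]
    ring_nf
  have hsecant : y * (√2 / 2) ≤ 3 * π / 4 * sin y :=
    hsin ▸ mul_sin_le_mul_sin hy hy' (by linarith)
  have hsin_nonneg : 0 ≤ sin y := sin_nonneg_of_nonneg_of_le_pi hy (by linarith)
  have hsqrt : 1.4 ≤ √2 := le_sqrt_of_sq_le (by norm_num)
  have hsecant' : 0.7 * y ≤ 3 * π / 4 * sin y := by nlinarith
  have hconst : 3 * π / 4 * sin y ≤ 0.7 * (2 + π / 2) * sin y := by gcongr; linarith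
  linarith

theorem mul_sin_le_two_add_pi_div_two_mul_sin_mul {m x : ℝ} (hm : 0 ≤ m) (hx : 0 ≤ x)
    (hmx : m * x ≤ 3 * π / 4) : m * sin x ≤ (2 + π / 2) * sin (m * x) :=
  (mul_le_mul_of_nonneg_left (sin_le hx) hm).trans
    (le_two_add_pi_div_two_mul_sin (mul_nonneg hm hx) hmx)

theorem intCast_mul_sin_pi_div_le {n : ℕ} (hn : 3 ≤ n) {m : ℤ} (hm : 0 ≤ m)
    (hmn : 2 * m ≤ n + 2) : m * sin (π / n) ≤ (2 + π / 2) * sin (m * (π / n)) := by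
  have hmn' : (4 * m : ℝ) ≤ 3 * n := by exact_mod_cast (by omega : 4 * m ≤ 3 * n)
  refine mul_sin_le_two_add_pi_div_two_mul_sin_mul (by exact_mod_cast hm) (by positivity) ?_
  rw [← mul_div_assoc, div_le_iff₀ (by positivity)]
  nlinarith [pi_pos]

/-- The unit vector of the Euclidean plane at angle `φ` from the first coordinate axis. It describes
the vertices of a regular polygon and the directions onto which the polygon is projected. -/
noncomputable def planeUnitVector (φ : ℝ) : EuclideanSpace ℝ (Fin 2) :=
  !₂[cos φ, sin φ]

theorem inner_planeUnitVector (α β : ℝ) :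
    inner ℝ (planeUnitVector α) (planeUnitVector β) = cos (α - β) := by
  simp [planeUnitVector, PiLp.inner_apply, Fin.sum_univ_two, cos_sub, mul_comm]

theorem norm_planeUnitVector (φ : ℝ) : ‖planeUnitVector φ‖ = 1 := by
  rw [norm_eq_sqrt_real_inner, inner_planeUnitVector, sub_self, cos_zero, sqrt_one]

theorem dist_planeUnitVector (α β : ℝ) :
    dist (planeUnitVector α) (planeUnitVector β) = 2 * |sin ((α - β) / 2)| := by
  have hcos : cos (α - β) = 1 - 2 * sin ((α - β) / 2) ^ 2 := by
    rw [← cos_sq_add_sin_sq ((α - β) / 2), ← mul_div_cancel₀ (α - β) two_ne_zero, cos_two_mul']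
    ring_nf
  rw [dist_eq_norm, ← sq_eq_sq₀ (norm_nonneg _) (by positivity), norm_sub_sq_real,
    norm_planeUnitVector, norm_planeUnitVector, inner_planeUnitVector, hcos, mul_pow, sq_abs]
  ring

theorem inner_lineMap_sub_left {E : Type*} [NormedAddCommGroup E] [InnerProductSpace ℝ E]
    (p q c u : E) (r : ℝ) :
    inner ℝ (AffineMap.lineMap p q r - c) u =
      (1 - r) * inner ℝ (p - c) u + r * inner ℝ (q - c) u := by
  have hcomb : AffineMap.lineMap p q r - c = (1 - r) • (p - c) + r • (q - c) := by
    rw [AffineMap.lineMap_apply_module]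
    module
  rw [hcomb, inner_add_left, real_inner_smul_left, real_inner_smul_left]

section RegularPolygon

variable {n : ℕ} {c : EuclideanSpace ℝ (Fin 2)} {R θ : ℝ}

theorem regularPolygonVertex_eq_add_smul (k : ℤ) :
    regularPolygonVertex n c R θ k = c + R • planeUnitVector (θ + 2 * π * k / n) :=
  rfl

theorem regularPolygonVertex_add_natCast (hn : n ≠ 0) (k : ℤ) :
    regularPolygonVertex n c R θ (k + n) = regularPolygonVertex n c R θ k := by
  have hangle : θ + 2 * π * ((k + n : ℤ) : ℝ) / n = θ + 2 * π * k / n + 2 * π := by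
    push_cast
    field_simp
    ring
  simp only [regularPolygonVertex, hangle, cos_add_two_pi, sin_add_two_pi]

theorem dist_regularPolygonVertex (j k : ℤ) :
    dist (regularPolygonVertex n c R θ j) (regularPolygonVertex n c R θ k) =
      2 * |R| * |sin ((j - k) * (π / n))| := by
  have hangle : (θ + 2 * π * j / n - (θ + 2 * π * k / n)) / 2 = (j - k) * (π / n) := by ring
  rw [regularPolygonVertex_eq_add_smul, regularPolygonVertex_eq_add_smul, dist_add_left,
    dist_smul₀, dist_planeUnitVector, hangle, norm_eq_abs]
  ring

theorem dist_regularPolygonVertex_succ (hR : 0 ≤ R) (k : ℤ) :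
    dist (regularPolygonVertex n c R θ (k + 1)) (regularPolygonVertex n c R θ k) =
      2 * R * sin (π / n) := by
  have hsin : 0 ≤ sin (π / n) := by
    rcases n.eq_zero_or_pos with rfl | hn
    · simp
    · exact sin_nonneg_of_nonneg_of_le_pi (by positivity)
        (div_le_self pi_pos.le (by exact_mod_cast hn))
  rw [dist_regularPolygonVertex, Int.cast_add, Int.cast_one, add_sub_cancel_left, one_mul,
    abs_of_nonneg hR, abs_of_nonneg hsin]

theorem norm_regularPolygonVertex_one_sub_zero (hR : 0 ≤ R) :
    ‖regularPolygonVertex n c R θ 1 - regularPolygonVertex n c R θ 0‖ = 2 * R * sin (π / n) := by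
  rw [← dist_eq_norm, ← dist_regularPolygonVertex_succ hR 0, zero_add]

theorem norm_regularPolygonVertex_one_sub_zero_pos (hn : 2 ≤ n) (hR : 0 < R) :
    0 < ‖regularPolygonVertex n c R θ 1 - regularPolygonVertex n c R θ 0‖ := by
  have hsin : 0 < sin (π / n) := sin_pos_of_pos_of_lt_pi (by positivity)
    (div_lt_self pi_pos (by exact_mod_cast hn))
  rw [norm_regularPolygonVertex_one_sub_zero hR.le]
  positivity

theorem inner_regularPolygonVertex_sub_center (k : ℤ) (φ : ℝ) :
    inner ℝ (regularPolygonVertex n c R θ k - c) (planeUnitVector (φ + π / 2)) =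
      R * sin (θ + 2 * π * k / n - φ) := by
  rw [regularPolygonVertex_eq_add_smul, add_sub_cancel_left, real_inner_smul_left,
    inner_planeUnitVector, ← sub_sub, cos_sub_pi_div_two]

theorem le_dist_lineMap_regularPolygonVertex (j k : ℤ) (a b : ℝ) :
    R * ((1 - (b - a)) * sin ((k - j - 1) * (π / n)) +
        (1 + (b - a)) * sin ((k - j + 1) * (π / n))) ≤
      dist (AffineMap.lineMap (regularPolygonVertex n c R θ k)
          (regularPolygonVertex n c R θ (k + 1)) b)
        (AffineMap.lineMap (regularPolygonVertex n c R θ j)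
          (regularPolygonVertex n c R θ (j + 1)) a) := by
  set v := regularPolygonVertex n c R θ
  -- The common direction of the chords `v (k + 1) - v j` and `v k - v (j + 1)`.
  set u := planeUnitVector (θ + (j + k + 1) * (π / n) + π / 2)
  have hproj (i : ℤ) : inner ℝ (v i - c) u = R * sin ((2 * i - j - k - 1) * (π / n)) := by
    rw [inner_regularPolygonVertex_sub_center]
    ring_nf
  have hinner : inner ℝ (v k - c) u = R * sin ((k - j - 1) * (π / n)) ∧
      inner ℝ (v (j + 1) - c) u = -(R * sin ((k - j - 1) * (π / n))) := by
    rw [hproj, hproj, ← mul_neg, ← sin_neg]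
    push_cast
    constructor <;> ring_nf
  have houter : inner ℝ (v (k + 1) - c) u = R * sin ((k - j + 1) * (π / n)) ∧
      inner ℝ (v j - c) u = -(R * sin ((k - j + 1) * (π / n))) := by
    rw [hproj, hproj, ← mul_neg, ← sin_neg]
    push_cast
    constructor <;> ring_nf
  calc R * ((1 - (b - a)) * sin ((k - j - 1) * (π / n)) +
        (1 + (b - a)) * sin ((k - j + 1) * (π / n)))
      = inner ℝ (AffineMap.lineMap (v k) (v (k + 1)) b -
          AffineMap.lineMap (v j) (v (j + 1)) a) u := by
        rw [← sub_sub_sub_cancel_right _ _ c, inner_sub_left, inner_lineMap_sub_left,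
          inner_lineMap_sub_left, hinner.1, hinner.2, houter.1, houter.2]
        ring
    _ ≤ dist (AffineMap.lineMap (v k) (v (k + 1)) b)
          (AffineMap.lineMap (v j) (v (j + 1)) a) := by
        simpa only [u, norm_planeUnitVector, mul_one, dist_eq_norm] using real_inner_le_norm _ u

theorem mul_sideLength_le_mul_dist_lineMap (hn : 3 ≤ n) (hR : 0 ≤ R) {j k : ℤ} (hjk : j ≤ k)
    (hkj : 2 * (k - j) ≤ n) {a b : ℝ} (ha : a ∈ Set.Icc 0 1) (hb : b ∈ Set.Icc 0 1) :
    (k + b - (j + a)) * (2 * R * sin (π / n)) ≤ (2 + π / 2) *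
      dist (AffineMap.lineMap (regularPolygonVertex n c R θ k)
          (regularPolygonVertex n c R θ (k + 1)) b)
        (AffineMap.lineMap (regularPolygonVertex n c R θ j)
          (regularPolygonVertex n c R θ (j + 1)) a) := by
  have hpi := pi_pos
  have hab_lower : -1 ≤ b - a := by linarith [ha.2, hb.1]
  have hab_upper : b - a ≤ 1 := by linarith [ha.1, hb.2]
  rcases hjk.eq_or_lt with rfl | hlt
  · have hside : 0 ≤ 2 * R * sin (π / n) :=
      dist_regularPolygonVertex_succ (c := c) (θ := θ) hR j ▸ dist_nonneg
    rw [dist_lineMap_lineMap, dist_comm (regularPolygonVertex n c R θ j),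
      dist_regularPolygonVertex_succ hR, add_sub_add_left_eq_sub, Real.dist_eq]
    calc (b - a) * (2 * R * sin (π / n)) ≤ 1 * (|b - a| * (2 * R * sin (π / n))) := by
          rw [one_mul]
          gcongr
          exact le_abs_self _
      _ ≤ (2 + π / 2) * (|b - a| * (2 * R * sin (π / n))) := by gcongr; linarith
  · have hinner := intCast_mul_sin_pi_div_le hn (m := k - j - 1) (by omega) (by omega)
    have houter := intCast_mul_sin_pi_div_le hn (m := k - j + 1) (by omega) (by omega)
    push_cast at hinner houter
    calc (k + b - (j + a)) * (2 * R * sin (π / n)) =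
          R * ((1 - (b - a)) * ((k - j - 1) * sin (π / n)) +
            (1 + (b - a)) * ((k - j + 1) * sin (π / n))) := by ring
      _ ≤ R * ((1 - (b - a)) * ((2 + π / 2) * sin ((k - j - 1) * (π / n))) +
            (1 + (b - a)) * ((2 + π / 2) * sin ((k - j + 1) * (π / n)))) := by
          gcongr
          linarith
      _ = (2 + π / 2) * (R * ((1 - (b - a)) * sin ((k - j - 1) * (π / n)) +
            (1 + (b - a)) * sin ((k - j + 1) * (π / n)))) := by ring
      _ ≤ _ := by
          gcongr
          exact le_dist_lineMap_regularPolygonVertex j k a b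

variable {L : ℝ}

theorem regularPolygonBoundary_eq_lineMap
    (hL : L = ‖regularPolygonVertex n c R θ 1 - regularPolygonVertex n c R θ 0‖) (u : ℝ) :
    regularPolygonBoundary n c R θ u =
      AffineMap.lineMap (regularPolygonVertex n c R θ ⌊u / L⌋)
        (regularPolygonVertex n c R θ (⌊u / L⌋ + 1)) (Int.fract (u / L)) := by
  rw [AffineMap.lineMap_apply_module', add_comm, hL]
  rfl

theorem regularPolygonBoundary_periodic (hn : n ≠ 0) (hL₀ : L ≠ 0)
    (hL : L = ‖regularPolygonVertex n c R θ 1 - regularPolygonVertex n c R θ 0‖) :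
    Function.Periodic (regularPolygonBoundary n c R θ) (n * L) := by
  intro u
  rw [regularPolygonBoundary_eq_lineMap hL, regularPolygonBoundary_eq_lineMap hL, add_div,
    mul_div_cancel_right₀ _ hL₀, Int.floor_add_natCast, Int.fract_add_natCast,
    add_right_comm, regularPolygonVertex_add_natCast hn, regularPolygonVertex_add_natCast hn]

theorem sub_le_mul_dist_regularPolygonBoundary (hn : 3 ≤ n) (hR : 0 < R)
    (hL : L = ‖regularPolygonVertex n c R θ 1 - regularPolygonVertex n c R θ 0‖) {s t : ℝ}
    (hst : s ≤ t) (hfloor : 2 * (⌊t / L⌋ - ⌊s / L⌋) ≤ n) :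
    t - s ≤ (2 + π / 2) *
      dist (regularPolygonBoundary n c R θ t) (regularPolygonBoundary n c R θ s) := by
  have hL₀ : 0 < L := hL ▸ norm_regularPolygonVertex_one_sub_zero_pos (by omega) hR
  have hside : L = 2 * R * sin (π / n) := hL.trans (norm_regularPolygonVertex_one_sub_zero hR.le)
  have hfract (x : ℝ) : Int.fract x ∈ Set.Icc 0 1 :=
    ⟨Int.fract_nonneg x, (Int.fract_lt_one x).le⟩
  have hbound := mul_sideLength_le_mul_dist_lineMap (c := c) (θ := θ) hn hR.le
    (Int.floor_le_floor (div_le_div_of_nonneg_right hst hL₀.le)) hfloor (hfract (s / L))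
    (hfract (t / L))
  rwa [Int.floor_add_fract, Int.floor_add_fract, ← hside, ← sub_div, div_mul_cancel₀ _ hL₀.ne',
    ← regularPolygonBoundary_eq_lineMap hL, ← regularPolygonBoundary_eq_lineMap hL] at hbound

theorem min_arc_le_mul_dist_regularPolygonBoundary (hn : 3 ≤ n) (hR : 0 < R)
    (hL : L = ‖regularPolygonVertex n c R θ 1 - regularPolygonVertex n c R θ 0‖) {s t : ℝ}
    (hst : s ≤ t) (hts : t ≤ s + n * L) :
    min (t - s) (n * L - (t - s)) ≤ (2 + π / 2) *
      dist (regularPolygonBoundary n c R θ t) (regularPolygonBoundary n c R θ s) := by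
  have hL₀ : L ≠ 0 := (hL ▸ norm_regularPolygonVertex_one_sub_zero_pos (by omega) hR : 0 < L).ne'
  by_cases hfloor : 2 * (⌊t / L⌋ - ⌊s / L⌋) ≤ n
  · exact (min_le_left _ _).trans (sub_le_mul_dist_regularPolygonBoundary hn hR hL hst hfloor)
  · have hfloor' : 2 * (⌊(s + n * L) / L⌋ - ⌊t / L⌋) ≤ n := by
      rw [add_div, mul_div_cancel_right₀ _ hL₀, Int.floor_add_natCast]
      omega
    have hbound := sub_le_mul_dist_regularPolygonBoundary hn hR hL hts hfloor'
    rw [regularPolygonBoundary_periodic (by omega) hL₀ hL, dist_comm] at hbound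
    exact (min_le_right _ _).trans (by linarith)

end RegularPolygon

/-- if `a`, `b` are two points on the boundary of a regular Euclidean
`n`-gon `F` (`n ≥ 3`), then the length `ℓ(a,b)` of the shorter of the two boundary arcs
of `∂F` joining `a` and `b` satisfies `ℓ(a,b) ≤ (2 + π/2)·‖a - b‖`. Here the boundary is
parametrized by arc length by `γ` with period the perimeter `P = n·L`, so two points
`a = γ s`, `b = γ t` with `s, t ∈ [0, P]` split `∂F` into two arcs of lengths `|s - t|`
and `P - |s - t|`. -/
theorem regular_polygon_boundary_shortcut (n : ℕ) (hn : 3 ≤ n)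
    (c : EuclideanSpace ℝ (Fin 2)) (R θ : ℝ) (hR : 0 < R)
    (v : ℤ → EuclideanSpace ℝ (Fin 2)) (hv : v = regularPolygonVertex n c R θ)
    (L P : ℝ) (hL : L = ‖v 1 - v 0‖) (hP : P = n * L)
    (γ : ℝ → EuclideanSpace ℝ (Fin 2)) (hγ : γ = regularPolygonBoundary n c R θ)
    (s t : ℝ) (hs : s ∈ Set.Icc 0 P) (ht : t ∈ Set.Icc 0 P) :
    min |s - t| (P - |s - t|) ≤ (2 + π / 2) * ‖γ s - γ t‖ := by
  subst hv hγ hP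
  rw [← dist_eq_norm]
  rcases le_total s t with hst | hts
  · rw [abs_sub_comm, abs_of_nonneg (sub_nonneg.2 hst), dist_comm]
    exact min_arc_le_mul_dist_regularPolygonBoundary hn hR hL hst (by linarith [hs.1, ht.2])
  · rw [abs_of_nonneg (sub_nonneg.2 hts)]
    exact min_arc_le_mul_dist_regularPolygonBoundary hn hR hL hts (by linarith [ht.1, hs.2])
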